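/- Let R be a Hecke symmetry with parameter q such that j_q ≠ 0 for 2 ≤ j ≤ k. Then the R-symmetrizer S^(k) satisfies S^(k) R_i = R_i S^(k) = q S^(k) and S^(k) R_i⁻¹ = R_i⁻¹ S^(k) = q⁻¹ S^(k) for every 1 ≤ i ≤ k−1. -/

import Mathlib

open Matrix BigOperators

noncomputable section

/-- An `N² × N²` complex matrix, viewed as an operator on `ℂ^N ⊗ ℂ^N`. -/
abbrev RMat (N : ℕ) := Matrix (Fin N × Fin N) (Fin N × Fin N) ℂ

/-- A matrix on the `k`-th tensor power of `ℂ^N`, with entries in `A`. -/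
abbrev TMat (N k : ℕ) (A : Type _) := Matrix (Fin k → Fin N) (Fin k → Fin N) A

/-- The `q`-number `j_q = (q^j - q^{-j})/(q - q^{-1})`. -/
def qNum (q : ℂ) (j : ℕ) : ℂ := (q ^ j - q⁻¹ ^ j) / (q - q⁻¹)

/-- Embedding of an `N²×N²` matrix `R` into the `k`-th tensor power,
acting in the (0-based) tensor factors `i` and `i+1`.  The paper's `R_i`
(1-based) is `embR k R (i-1)`. -/
def embR {N : ℕ} (k : ℕ) (R : RMat N) (i : ℕ) : TMat N k ℂ := fun f g =>
  if h : i + 1 < k then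
    if ∀ j : Fin k, j.val ≠ i → j.val ≠ i + 1 → f j = g j then
      R (f ⟨i, Nat.lt_of_succ_lt h⟩, f ⟨i + 1, h⟩) (g ⟨i, Nat.lt_of_succ_lt h⟩, g ⟨i + 1, h⟩)
    else 0
  else (1 : TMat N k ℂ) f g

/-- `X ⊗ I^{⊗(k-1)}` : the first copy `X_{1̄}` of an `N×N` matrix over `A`. -/
def emb1 {N : ℕ} (k : ℕ) {A : Type _} [Ring A] (X : Matrix (Fin N) (Fin N) A) :
    TMat N k A := fun f g =>
  if h : 0 < k then
    if ∀ j : Fin k, j.val ≠ 0 → f j = g j then X (f ⟨0, h⟩) (g ⟨0, h⟩) else 0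
  else (1 : TMat N k A) f g

/-- Lift a complex matrix to a matrix over the `ℂ`-algebra `A`. -/
def liftC {N k : ℕ} (A : Type _) [Ring A] [Algebra ℂ A] (X : TMat N k ℂ) : TMat N k A :=
  X.map (algebraMap ℂ A)

/-- The copies `X_{1̄}, X_{2̄}, …` of `X` in the `k`-th tensor power:
`copyX k R Rinv X i` is the paper's `X_{\overline{i+1}}`, i.e.
`X_{1̄} = X ⊗ I^{⊗(k-1)}` and `X_{\overline{i+1}} = R_i X_{ī} R_i⁻¹`. -/
def copyX {N : ℕ} (k : ℕ) (R Rinv : RMat N) {A : Type _} [Ring A] [Algebra ℂ A]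
    (X : Matrix (Fin N) (Fin N) A) : ℕ → TMat N k A
  | 0 => emb1 k X
  | i + 1 => liftC A (embR k R i) * copyX k R Rinv X i * liftC A (embR k Rinv i)

/-- The `R`-skew-symmetrizers, on the ambient `k`-th tensor power:
`Asym k R q j` is `A^{(j)}` (acting in the first `j` factors). -/
def Asym {N : ℕ} (k : ℕ) (R : RMat N) (q : ℂ) : ℕ → TMat N k ℂ
  | 0 => 1
  | 1 => 1
  | j + 2 =>
      (qNum q (j + 2))⁻¹ •
        (Asym k R q (j + 1) *
          ((q ^ (j + 1)) • (1 : TMat N k ℂ) - (qNum q (j + 1)) • embR k R j) *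
          Asym k R q (j + 1))

/-- The `R`-symmetrizers, on the ambient `k`-th tensor power:
`Ssym k R q j` is `S^{(j)}` (acting in the first `j` factors). -/
def Ssym {N : ℕ} (k : ℕ) (R : RMat N) (q : ℂ) : ℕ → TMat N k ℂ
  | 0 => 1
  | 1 => 1
  | j + 2 =>
      (qNum q (j + 2))⁻¹ •
        (Ssym k R q (j + 1) *
          ((q⁻¹ ^ (j + 1)) • (1 : TMat N k ℂ) + (qNum q (j + 1)) • embR k R j) *
          Ssym k R q (j + 1))

/-- The braid relation `R₁₂ R₂₃ R₁₂ = R₂₃ R₁₂ R₂₃` on `(ℂ^N)^{⊗3}`. -/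
def IsBraiding {N : ℕ} (R : RMat N) : Prop :=
  embR 3 R 0 * embR 3 R 1 * embR 3 R 0 = embR 3 R 1 * embR 3 R 0 * embR 3 R 1

/-- The Hecke condition `(q·I − R)(q⁻¹·I + R) = 0`. -/
def HeckeCond {N : ℕ} (R : RMat N) (q : ℂ) : Prop :=
  (q • (1 : RMat N) - R) * (q⁻¹ • (1 : RMat N) + R) = 0

/-- The Reflection Equation `R M₁ R M₁ = M₁ R M₁ R` (on `(ℂ^N)^{⊗2}`,
with entries in `A`). -/
def RERel {N : ℕ} (R : RMat N) {A : Type _} [Ring A] [Algebra ℂ A]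
    (M : Matrix (Fin N) (Fin N) A) : Prop :=
  liftC A (embR 2 R 0) * emb1 2 M * liftC A (embR 2 R 0) * emb1 2 M
    = emb1 2 M * liftC A (embR 2 R 0) * emb1 2 M * liftC A (embR 2 R 0)

/-- The relation `R⁻¹ D₁ R⁻¹ D₁ = D₁ R⁻¹ D₁ R⁻¹` on the matrix `D`,
where `Rinv = R⁻¹`. -/
def DDRel {N : ℕ} (Rinv : RMat N) {A : Type _} [Ring A] [Algebra ℂ A]
    (D : Matrix (Fin N) (Fin N) A) : Prop :=
  liftC A (embR 2 Rinv 0) * emb1 2 D * liftC A (embR 2 Rinv 0) * emb1 2 D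
    = emb1 2 D * liftC A (embR 2 Rinv 0) * emb1 2 D * liftC A (embR 2 Rinv 0)

/-- The permutation relations `D₁ R M₁ = R M₁ R⁻¹ D₁ R⁻¹ + I`, where `Rinv = R⁻¹`. -/
def PermRel {N : ℕ} (R Rinv : RMat N) {A : Type _} [Ring A] [Algebra ℂ A]
    (M D : Matrix (Fin N) (Fin N) A) : Prop :=
  emb1 2 D * liftC A (embR 2 R 0) * emb1 2 M
    = liftC A (embR 2 R 0) * emb1 2 M * liftC A (embR 2 Rinv 0) * emb1 2 D *
        liftC A (embR 2 Rinv 0) + 1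

/-- `Ψ` is the skew-inverse of `R`:  `Σ_{j,b} R^{ij}_{ab} Ψ^{bc}_{jd} = δ^i_d δ^c_a`. -/
def SkewInv {N : ℕ} (R Ψ : RMat N) : Prop :=
  ∀ i a c d : Fin N,
    (∑ j : Fin N, ∑ b : Fin N, R (i, j) (a, b) * Ψ (b, c) (j, d))
      = if i = d ∧ c = a then 1 else 0

/-- The matrix `C`, `C^c_d = Σ_i Ψ^{ic}_{id}`. -/
def Cmat {N : ℕ} (Ψ : RMat N) : Matrix (Fin N) (Fin N) ℂ :=
  fun c d => ∑ i : Fin N, Ψ (i, c) (i, d)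

/-- The `R`-trace over all `k` tensor factors: `⟨X⟩_{1…k} = Tr(C^{⊗k} X)`. -/
def rTr {N k : ℕ} {A : Type _} [Ring A] [Algebra ℂ A] (C : Matrix (Fin N) (Fin N) ℂ)
    (X : TMat N k A) : A :=
  ∑ f : Fin k → Fin N, ∑ g : Fin k → Fin N, (∏ j : Fin k, C (f j) (g j)) • X g f

/-- The chain `X_{1̄} X_{2̄} ⋯ X_{n̄}`. -/
def upChain {N : ℕ} (k : ℕ) (R Rinv : RMat N) {A : Type _} [Ring A] [Algebra ℂ A]
    (X : Matrix (Fin N) (Fin N) A) (n : ℕ) : TMat N k A :=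
  ((List.range n).map (copyX k R Rinv X)).prod

/-- The reversed chain `X_{n̄} X_{\overline{n-1}} ⋯ X_{1̄}`. -/
def downChain {N : ℕ} (k : ℕ) (R Rinv : RMat N) {A : Type _} [Ring A] [Algebra ℂ A]
    (X : Matrix (Fin N) (Fin N) A) (n : ℕ) : TMat N k A :=
  ((List.range n).reverse.map (copyX k R Rinv X)).prod

/-- The Capelli chain `L_{1̄}(L_{2̄} + q·1_q I)(L_{3̄} + q²·2_q I) ⋯ (L_{n̄} + q^{n-1}·(n-1)_q I)`
(note `0_q = 0`). -/
def capChainA {N : ℕ} (k : ℕ) (R Rinv : RMat N) (q : ℂ) {A : Type _} [Ring A] [Algebra ℂ A]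
    (L : Matrix (Fin N) (Fin N) A) (n : ℕ) : TMat N k A :=
  ((List.range n).map
    (fun i => copyX k R Rinv L i + ((q ^ i) * qNum q i) • (1 : TMat N k A))).prod

/-- The symmetric Capelli chain
`L_{1̄}(L_{2̄} - q⁻¹·1_q I) ⋯ (L_{n̄} - q^{-(n-1)}·(n-1)_q I)`. -/
def capChainS {N : ℕ} (k : ℕ) (R Rinv : RMat N) (q : ℂ) {A : Type _} [Ring A] [Algebra ℂ A]
    (L : Matrix (Fin N) (Fin N) A) (n : ℕ) : TMat N k A :=
  ((List.range n).map
    (fun i => copyX k R Rinv L i - ((q⁻¹ ^ i) * qNum q i) • (1 : TMat N k A))).prod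

/-- The descending chain `R_{a→b} = R_a R_{a-1} ⋯ R_b` (1-based indices;
identity when `b > a`). -/
def rChainDesc {N : ℕ} (k : ℕ) (R : RMat N) (a b : ℕ) : TMat N k ℂ :=
  ((List.range' b (a + 1 - b)).reverse.map (fun j => embR k R (j - 1))).prod

/-- The ascending chain `R_{b→a} = R_b R_{b+1} ⋯ R_a` (1-based indices;
identity when `b > a`). -/
def rChainAsc {N : ℕ} (k : ℕ) (R : RMat N) (b a : ℕ) : TMat N k ℂ :=
  ((List.range' b (a + 1 - b)).map (fun j => embR k R (j - 1))).prod

/-!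
Abstractly, `S_n` is built from the generators `g_0, …, g_{n-1}` of a Hecke algebra by
`S_{n+1} = [n+2]⁻¹ S_n (q^{-n-1} + [n+1] g_n) S_n`, and `g_i S_n = q S_n` for `i < n` goes by
induction. For `i < n` the leftmost factor `S_n` of `S_{n+1}` already absorbs `g_i`. For `i = n`,
expand that leftmost factor once more. Since `g_n` commutes with `S_{n-1}`, and `S_{n-1} S_n = S_n`
because every factor of `S_{n-1}` acts on `S_n` by a scalar, `S_{n+1}` is a multiple of
`S_{n-1} (q^{-n} + [n] g_{n-1}) (q^{-n-1} + [n+1] g_n) S_n`. By the Hecke condition and the braid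
relation, `g_n` acts by `q` on what follows `S_{n-1}`. The opposite algebra gives `S_n g_i = q S_n`.
-/

section HeckeSymmetrizer

/-- The symmetric `q`-integer `[n]_q = q^{1-n} + q^{3-n} + ⋯ + q^{n-1}`. Being a sum rather than a
quotient, it keeps its meaning at `q = ±1`. -/
def qInt {K : Type*} [Field K] (q : K) (n : ℕ) : K :=
  ∑ i ∈ Finset.range n, q⁻¹ ^ i * q ^ (n - 1 - i)

lemma qInt_one {K : Type*} [Field K] (q : K) : qInt q 1 = 1 := by
  simp [qInt]

lemma qInt_succ {K : Type*} [Field K] (q : K) (n : ℕ) :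
    qInt q (n + 1) = q⁻¹ ^ n + q * qInt q n :=
  geom_sum₂_succ_eq q⁻¹ q

lemma qNum_eq_qInt {q : ℂ} (hq : q⁻¹ ≠ q) (n : ℕ) : qNum q n = qInt q n := by
  rw [qInt, geom₂_sum hq, ← neg_div_neg_eq, neg_sub, neg_sub, qNum]

variable {K A : Type*} [Field K] [Ring A] [Algebra K A]

/-- The elements `g 0, …, g (n - 1)` satisfy the defining relations of the Hecke algebra of type
`A_n` with parameter `q`. Nothing is required of the later terms of the sequence. -/
structure IsHeckeFamily (q : K) (g : ℕ → A) (n : ℕ) : Prop where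
  quadratic : ∀ i < n, (q • 1 - g i) * (q⁻¹ • 1 + g i) = 0
  braid : ∀ i, i + 1 < n → g i * g (i + 1) * g i = g (i + 1) * g i * g (i + 1)
  commute : ∀ i j, i + 1 < j → j < n → Commute (g i) (g j)

/-- The `q`-symmetrizer `S^{(n+1)}` built from `g 0, …, g (n - 1)`. It is indexed by the number of
generators, which is one less than the number of tensor factors. -/
def heckeSymmetrizer (q : K) (g : ℕ → A) : ℕ → A
  | 0 => 1
  | n + 1 => (qInt q (n + 2))⁻¹ •
      (heckeSymmetrizer q g n * (q⁻¹ ^ (n + 1) • 1 + qInt q (n + 1) • g n) *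
        heckeSymmetrizer q g n)

variable {q : K} {g : ℕ → A} {n m : ℕ}

lemma smul_heckeSymmetrizer_succ (h : qInt q (n + 2) ≠ 0) :
    qInt q (n + 2) • heckeSymmetrizer q g (n + 1) =
      heckeSymmetrizer q g n * (q⁻¹ ^ (n + 1) • 1 + qInt q (n + 1) • g n) *
        heckeSymmetrizer q g n := by
  rw [heckeSymmetrizer, smul_inv_smul₀ h]

lemma commute_heckeSymmetrizer {b : A} (h : ∀ i < n, Commute (g i) b) :
    Commute (heckeSymmetrizer q g n) b := by
  induction n with
  | zero => exact Commute.one_left b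
  | succ n ih =>
    have hS := ih fun i hi ↦ h i (by lia)
    have hg : Commute (q⁻¹ ^ (n + 1) • 1 + qInt q (n + 1) • g n) b :=
      ((Commute.one_left b).smul_left _).add_left ((h n (by lia)).smul_left _)
    exact ((hS.mul_left hg).mul_left hS).smul_left _

lemma heckeSymmetrizer_mul_eq_self {x : A} (hq : ∀ j, 2 ≤ j → j ≤ n + 1 → qInt q j ≠ 0)
    (hx : ∀ i < n, g i * x = q • x) : heckeSymmetrizer q g n * x = x := by
  induction n with
  | zero => exact one_mul x
  | succ n ih =>
    have hS := ih (fun j hj hjn ↦ hq j hj (by lia)) fun i hi ↦ hx i (by lia)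
    have hfactor : (q⁻¹ ^ (n + 1) • 1 + qInt q (n + 1) • g n) * x = qInt q (n + 2) • x := by
      rw [add_mul, smul_mul_assoc, smul_mul_assoc, one_mul, hx n (by lia), qInt_succ q (n + 1)]
      module
    rw [heckeSymmetrizer, smul_mul_assoc, mul_assoc, hS, mul_assoc, hfactor, mul_smul_comm, hS,
      inv_smul_smul₀ (hq _ (by lia) le_rfl)]

lemma op_heckeSymmetrizer (q : K) (g : ℕ → A) (n : ℕ) :
    MulOpposite.op (heckeSymmetrizer q g n) = heckeSymmetrizer q (fun i ↦ .op (g i)) n := by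
  induction n with
  | zero => rfl
  | succ n ih => simp [heckeSymmetrizer, ← ih, mul_assoc]

lemma mul_quadratic_factor {b : A} (h : (q • 1 - b) * (q⁻¹ • 1 + b) = 0) :
    b * (q⁻¹ • 1 + b) = q • (q⁻¹ • 1 + b) := by
  rw [sub_mul, smul_mul_assoc, one_mul, sub_eq_zero] at h
  exact h.symm

/-- On an eigenvector `x` of `a`, the product of the two linear factors becomes a combination of
`(q⁻¹ + b) * x`, an eigenvector of `b` by the quadratic relation, and of `a * b * x`, an eigenvector
of `b` by the braid relation. -/
lemma mul_baxterized_mul {a b x : A} (α β : K) (hb : (q • 1 - b) * (q⁻¹ • 1 + b) = 0)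
    (hab : a * b * a = b * a * b) (hax : a * x = q • x) :
    b * ((α • 1 + β • a) * ((α * q⁻¹) • 1 + (α + q * β) • b) * x) =
      q • ((α • 1 + β • a) * ((α * q⁻¹) • 1 + (α + q * β) • b) * x) := by
  have hdecomp : (α • 1 + β • a) * ((α * q⁻¹) • 1 + (α + q * β) • b) * x =
      (α + q * β) • (α • ((q⁻¹ • 1 + b) * x) + β • (a * b * x)) := by
    simp only [add_mul, mul_add, smul_mul_assoc, mul_smul_comm, one_mul, mul_one, mul_assoc, hax]
    module
  have hquad : b * ((q⁻¹ • 1 + b) * x) = q • ((q⁻¹ • 1 + b) * x) := by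
    rw [← mul_assoc, mul_quadratic_factor hb, smul_mul_assoc]
  have hbraid : b * (a * b * x) = q • (a * b * x) := by
    rw [← mul_assoc, ← mul_assoc, ← hab, mul_assoc, hax, mul_smul_comm]
  rw [hdecomp, mul_smul_comm, mul_add, mul_smul_comm, mul_smul_comm, hquad, hbraid]
  module

lemma mul_heckeSymmetrizer_one (hg : (q • 1 - g 0) * (q⁻¹ • 1 + g 0) = 0) :
    g 0 * heckeSymmetrizer q g 1 = q • heckeSymmetrizer q g 1 := by
  simp only [heckeSymmetrizer, zero_add, pow_one, qInt_one, one_smul, one_mul, mul_one]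
  rw [mul_smul_comm, mul_quadratic_factor hg, smul_comm]

lemma smul_mul_mul_eq_of_sandwich {P E F G : A} {c : K} (hE : c • E = P * G * P) (hPE : P * E = E)
    (hPF : Commute P F) : c • (E * F * E) = P * (G * F * E) := by
  calc c • (E * F * E)
      = P * G * (P * F) * E := by
        rw [← smul_mul_assoc, ← smul_mul_assoc, hE, mul_assoc _ P F]
    _ = P * (G * F * (P * E)) := by
        rw [hPF.eq]
        simp only [mul_assoc]
    _ = P * (G * F * E) := by rw [hPE]

namespace IsHeckeFamily

lemma mono (hg : IsHeckeFamily q g n) (hmn : m ≤ n) : IsHeckeFamily q g m where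
  quadratic i hi := hg.quadratic i (by lia)
  braid i hi := hg.braid i (by lia)
  commute i j hij hj := hg.commute i j hij (by lia)

lemma op (hg : IsHeckeFamily q g n) : IsHeckeFamily q (fun i ↦ MulOpposite.op (g i)) n where
  quadratic i hi := by
    have hcomm : Commute (q • 1 - g i) (q⁻¹ • 1 + g i) :=
      (((Commute.one_left _).smul_left q).sub_left
        (((Commute.one_right _).smul_right q⁻¹).add_right (Commute.refl _)))
    apply MulOpposite.unop_injective
    simpa using hcomm.eq ▸ hg.quadratic i hi
  braid i hi := by
    apply MulOpposite.unop_injective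
    simpa [mul_assoc] using hg.braid i hi
  commute i j hij hj := (hg.commute i j hij hj).op

lemma last_mul_heckeSymmetrizer (hg : IsHeckeFamily q g (n + 2))
    (hq : ∀ j, 2 ≤ j → j ≤ n + 2 → qInt q j ≠ 0)
    (hS : ∀ i < n + 1, g i * heckeSymmetrizer q g (n + 1) = q • heckeSymmetrizer q g (n + 1)) :
    g (n + 1) * heckeSymmetrizer q g (n + 2) = q • heckeSymmetrizer q g (n + 2) := by
  set P := heckeSymmetrizer q g n
  set E := heckeSymmetrizer q g (n + 1)
  set F := q⁻¹ ^ (n + 2) • 1 + qInt q (n + 2) • g (n + 1) with hF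
  have hPE : P * E = E := heckeSymmetrizer_mul_eq_self (fun j hj hjn ↦ hq j hj (by lia))
    fun i hi ↦ hS i (by lia)
  have hPb : Commute P (g (n + 1)) := commute_heckeSymmetrizer fun i hi ↦
    hg.commute i (n + 1) (by lia) (by lia)
  have hPF : Commute P F :=
    ((Commute.one_right P).smul_right _).add_right (hPb.smul_right _)
  have hEFE := smul_mul_mul_eq_of_sandwich
    (smul_heckeSymmetrizer_succ (hq _ (by lia) le_rfl)) hPE hPF
  have hbaxter := mul_baxterized_mul (q⁻¹ ^ (n + 1)) (qInt q (n + 1))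
    (hg.quadratic (n + 1) (by lia)) (hg.braid n (by lia)) (hS n (by lia))
  rw [← pow_succ, ← qInt_succ, ← hF] at hbaxter
  have hbEFE : g (n + 1) * (E * F * E) = q • (E * F * E) := by
    rw [← smul_right_inj (hq (n + 2) (by lia) le_rfl), ← mul_smul_comm, smul_comm _ q,
      hEFE, ← mul_assoc, ← hPb.eq, mul_assoc, hbaxter, mul_smul_comm]
  rw [heckeSymmetrizer, mul_smul_comm, hbEFE, smul_comm]

theorem mul_heckeSymmetrizer (hg : IsHeckeFamily q g n)
    (hq : ∀ j, 2 ≤ j → j ≤ n → qInt q j ≠ 0) :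
    ∀ i < n, g i * heckeSymmetrizer q g n = q • heckeSymmetrizer q g n := by
  induction n with
  | zero => simp
  | succ n ih =>
    have hS := ih (hg.mono n.le_succ) fun j hj hjn ↦ hq j hj (by lia)
    intro i hi
    obtain hi | rfl : i < n ∨ i = n := by lia
    · rw [heckeSymmetrizer, mul_smul_comm, mul_assoc, ← mul_assoc, hS i hi, smul_mul_assoc,
        smul_comm]
    · cases i with
      | zero => exact mul_heckeSymmetrizer_one (hg.quadratic 0 hi)
      | succ n => exact hg.last_mul_heckeSymmetrizer hq hS

theorem heckeSymmetrizer_mul (hg : IsHeckeFamily q g n)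
    (hq : ∀ j, 2 ≤ j → j ≤ n → qInt q j ≠ 0) (i : ℕ) (hi : i < n) :
    heckeSymmetrizer q g n * g i = q • heckeSymmetrizer q g n := by
  apply MulOpposite.op_injective
  simpa [op_heckeSymmetrizer] using hg.op.mul_heckeSymmetrizer hq i hi

end IsHeckeFamily

lemma mul_eq_inv_smul_of_mul_eq_smul {a b x : A} (hq : q ≠ 0) (hba : b * a = 1)
    (hax : a * x = q • x) : b * x = q⁻¹ • x := by
  rw [eq_inv_smul_iff₀ hq, ← mul_smul_comm, ← hax, ← mul_assoc, hba, one_mul]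

lemma mul_eq_inv_smul_of_mul_eq_smul' {a b x : A} (hq : q ≠ 0) (hab : a * b = 1)
    (hxa : x * a = q • x) : x * b = q⁻¹ • x := by
  rw [eq_inv_smul_iff₀ hq, ← smul_mul_assoc, ← hxa, mul_assoc, hab, mul_one]

end HeckeSymmetrizer

section TensorExtend

variable {ι κ μ n K : Type*}

/-- Splitting of the indices of a tensor power into those of the factors in the range of `φ` and
those of the remaining factors. -/
def splitRangeEquiv (φ : ι ↪ κ) :
    (κ → n) ≃ (ι → n) × ({j // j ∉ Set.range φ} → n) :=
  letI := Classical.decPred (· ∈ Set.range φ)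
  (Equiv.piEquivPiSubtypeProd (· ∈ Set.range φ) fun _ ↦ n).trans
    (((Equiv.ofInjective φ φ.injective).symm.arrowCongr (Equiv.refl n)).prodCongr (Equiv.refl _))

variable [CommSemiring K] [Fintype ι] [Fintype κ] [Fintype μ] [DecidableEq ι] [DecidableEq κ]
  [DecidableEq μ] [Fintype n] [DecidableEq n]

/-- The operator `X` on the tensor power indexed by `ι`, acting in the factors `φ i` of the tensor
power indexed by `κ` and as the identity in all other factors. -/
def tensorExtend (φ : ι ↪ κ) : Matrix (ι → n) (ι → n) K →ₐ[K] Matrix (κ → n) (κ → n) K :=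
  letI := Classical.decPred (· ∈ Set.range φ)
  ((reindexAlgEquiv K K (splitRangeEquiv φ).symm).toAlgHom.comp
    (kroneckerAlgEquiv (ι → n) ({j // j ∉ Set.range φ} → n) K).toAlgHom).comp
      Algebra.TensorProduct.includeLeft

open Classical in
lemma tensorExtend_apply (φ : ι ↪ κ) (X : Matrix (ι → n) (ι → n) K) (f g : κ → n) :
    tensorExtend φ X f g =
      if ∀ j ∉ Set.range φ, f j = g j then X (f ∘ φ) (g ∘ φ) else 0 := by
  have hfst (f : κ → n) : (splitRangeEquiv φ f).1 = f ∘ φ := rfl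
  have hsnd (f : κ → n) : (splitRangeEquiv φ f).2 = f ∘ Subtype.val := rfl
  simp [tensorExtend, hfst, hsnd, Matrix.one_apply, funext_iff]

lemma tensorExtend_trans (φ : ι ↪ κ) (ψ : κ ↪ μ) (X : Matrix (ι → n) (ι → n) K) :
    tensorExtend (φ.trans ψ) X = tensorExtend ψ (tensorExtend φ X) := by
  classical
  ext f g
  have hrange : (∀ j ∉ Set.range (φ.trans ψ), f j = g j) ↔
      (∀ j ∉ Set.range ψ, f j = g j) ∧ ∀ j ∉ Set.range φ, f (ψ j) = g (ψ j) := by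
    constructor
    · refine fun h ↦ ⟨fun j hj ↦ h j ?_, fun j hj ↦ h (ψ j) ?_⟩
      · rintro ⟨i, rfl⟩
        exact hj ⟨φ i, rfl⟩
      · rintro ⟨i, hi⟩
        exact hj ⟨i, ψ.injective hi⟩
    · rintro ⟨hψ, hφ⟩ j hj
      by_cases hjψ : j ∈ Set.range ψ
      · obtain ⟨j, rfl⟩ := hjψ
        exact hφ j fun ⟨i, hi⟩ ↦ hj ⟨i, congrArg ψ hi⟩
      · exact hψ j hjψ
  simp only [tensorExtend_apply, hrange, ite_and]
  rfl

open scoped Kronecker in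
lemma commute_tensorExtend_inl_inr (X : Matrix (ι → n) (ι → n) K)
    (Y : Matrix (κ → n) (κ → n) K) :
    Commute (tensorExtend (.inl : ι ↪ ι ⊕ κ) X) (tensorExtend .inr Y) := by
  let e := reindexAlgEquiv K K (Equiv.sumArrowEquivProdArrow ι κ n).symm
  have hfst (f : ι ⊕ κ → n) : (Equiv.sumArrowEquivProdArrow ι κ n f).1 =
      f ∘ Function.Embedding.inl := rfl
  have hsnd (f : ι ⊕ κ → n) : (Equiv.sumArrowEquivProdArrow ι κ n f).2 =
      f ∘ Function.Embedding.inr := rfl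
  have hX : tensorExtend .inl X = e (X ⊗ₖ 1) := by
    ext f g
    simp [e, tensorExtend_apply, Matrix.one_apply, funext_iff, hfst]
  have hY : tensorExtend .inr Y = e (1 ⊗ₖ Y) := by
    ext f g
    simp [e, tensorExtend_apply, Matrix.one_apply, funext_iff, hsnd]
  have hcomm : Commute (X ⊗ₖ (1 : Matrix (κ → n) (κ → n) K)) (1 ⊗ₖ Y) := by
    simp only [commute_iff_eq, ← mul_kronecker_mul, one_mul, mul_one]
  rw [hX, hY]
  exact hcomm.map e

lemma commute_tensorExtend {φ : ι ↪ μ} {ψ : κ ↪ μ}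
    (h : ∀ i j, φ i ≠ ψ j) (X : Matrix (ι → n) (ι → n) K) (Y : Matrix (κ → n) (κ → n) K) :
    Commute (tensorExtend φ X) (tensorExtend ψ Y) := by
  let θ : ι ⊕ κ ↪ μ := ⟨Sum.elim φ ψ, φ.injective.sumElim ψ.injective h⟩
  have hφ : φ = Function.Embedding.inl.trans θ := rfl
  have hψ : ψ = Function.Embedding.inr.trans θ := rfl
  rw [hφ, hψ, tensorExtend_trans, tensorExtend_trans]
  exact (commute_tensorExtend_inl_inr X Y).map _

end TensorExtend

section EmbR

variable {N k : ℕ}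

/-- The embedding of `m` consecutive tensor factors starting at position `i`. -/
def shiftEmb {m k : ℕ} (i : ℕ) (h : i + m ≤ k) : Fin m ↪ Fin k :=
  (Fin.natAddEmb i).trans (Fin.castLEEmb h)

/-- The algebra homomorphism placing an operator on two factors in the factors `i` and `i + 1`. -/
def embRHom (N : ℕ) {i : ℕ} (h : i + 2 ≤ k) : RMat N →ₐ[ℂ] TMat N k ℂ :=
  (tensorExtend (shiftEmb i h)).comp
    (reindexAlgEquiv ℂ ℂ (finTwoArrowEquiv (Fin N)).symm).toAlgHom

lemma mem_range_shiftEmb {m i : ℕ} (h : i + m ≤ k) (j : Fin k) :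
    j ∈ Set.range (shiftEmb i h) ↔ i ≤ j ∧ j < i + m := by
  constructor
  · rintro ⟨s, rfl⟩
    exact ⟨Nat.le_add_right _ _, Nat.add_lt_add_left s.isLt i⟩
  · rintro ⟨hij, hjm⟩
    exact ⟨⟨j - i, by lia⟩, Fin.ext (Nat.add_sub_cancel' hij)⟩

lemma embR_eq_embRHom {i : ℕ} (h : i + 2 ≤ k) (X : RMat N) : embR k X i = embRHom N h X := by
  ext f g
  have hoff : (∀ j ∉ Set.range (shiftEmb i h), f j = g j) ↔
      ∀ j : Fin k, j.val ≠ i → j.val ≠ i + 1 → f j = g j := by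
    refine forall_congr' fun j ↦ ?_
    rw [mem_range_shiftEmb, ← and_imp]
    exact imp_congr_left (by lia)
  rw [embR, dif_pos (by lia)]
  simp only [embRHom, AlgHom.comp_apply, tensorExtend_apply, hoff]
  rfl

lemma tensorExtend_shiftEmb_embR {m i s : ℕ} (hi : i + m ≤ k) (hs : s + 2 ≤ m) (X : RMat N) :
    tensorExtend (shiftEmb i hi) (embR m X s) = embR k X (i + s) := by
  have htrans : (shiftEmb s hs).trans (shiftEmb i hi) = shiftEmb (i + s) (by lia) := by
    ext t
    exact (Nat.add_assoc i s t).symm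
  rw [embR_eq_embRHom hs, embR_eq_embRHom (by lia), embRHom, embRHom, AlgHom.comp_apply,
    AlgHom.comp_apply, ← htrans, tensorExtend_trans]

lemma embR_braid {R : RMat N} (hR : IsBraiding R) {i : ℕ} (hi : i + 3 ≤ k) :
    embR k R i * embR k R (i + 1) * embR k R i =
      embR k R (i + 1) * embR k R i * embR k R (i + 1) := by
  have h0 := tensorExtend_shiftEmb_embR hi (s := 0) (by lia) R
  have h1 := tensorExtend_shiftEmb_embR hi (s := 1) (by lia) R
  rw [add_zero] at h0
  simp only [← h0, ← h1, ← map_mul]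
  rw [hR]

lemma commute_embR (X Y : RMat N) {i j : ℕ} (hij : i + 2 ≤ j) (hj : j + 2 ≤ k) :
    Commute (embR k X i) (embR k Y j) := by
  have hdisjoint (s t : Fin 2) : shiftEmb i (by lia) s ≠ shiftEmb j hj t := fun h ↦ by
    have hs := (mem_range_shiftEmb (k := k) (by lia) _).mp ⟨s, h⟩
    have ht := (mem_range_shiftEmb hj _).mp ⟨t, rfl⟩
    lia
  rw [embR_eq_embRHom (by lia), embR_eq_embRHom hj]
  exact commute_tensorExtend hdisjoint _ _

lemma embR_mul_embR_eq_one {X Y : RMat N} (hXY : X * Y = 1) {i : ℕ} (hi : i + 2 ≤ k) :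
    embR k X i * embR k Y i = 1 := by
  rw [embR_eq_embRHom hi, embR_eq_embRHom hi, ← map_mul, hXY, map_one]

lemma isHeckeFamily_embR {R : RMat N} {q : ℂ} (hR : IsBraiding R) (hq : HeckeCond R q) (n : ℕ) :
    IsHeckeFamily q (embR (n + 1) R) n where
  quadratic i hi := by
    simpa [embR_eq_embRHom (show i + 2 ≤ n + 1 by lia)] using
      congrArg (embRHom N (show i + 2 ≤ n + 1 by lia)) hq
  braid _ hi := embR_braid hR (by lia)
  commute _ _ hij hj := commute_embR R R (by lia) (by lia)

lemma Ssym_succ_eq_heckeSymmetrizer {q : ℂ} (hq : q⁻¹ ≠ q) (R : RMat N) (n : ℕ) :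
    Ssym k R q (n + 1) = heckeSymmetrizer q (embR k R) n := by
  induction n with
  | zero => rfl
  | succ n ih => rw [Ssym, heckeSymmetrizer, ih, qNum_eq_qInt hq, qNum_eq_qInt hq]

end EmbR

/-- eigenvalue property of the symmetrizer:
`S^(k) R_i = R_i S^(k) = q S^(k)` and `S^(k) R_i⁻¹ = R_i⁻¹ S^(k) = q⁻¹ S^(k)`
for every `1 ≤ i ≤ k−1`. -/
theorem statement9 {N : ℕ} (R Rinv : RMat N) (q : ℂ) (k : ℕ)
    (hq0 : q ≠ 0) (hq1 : q ≠ 1) (hqm1 : q ≠ -1)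
    (hinv : R * Rinv = 1) (hinv' : Rinv * R = 1)
    (hbr : IsBraiding R) (hH : HeckeCond R q)
    (hqk : ∀ j : ℕ, 2 ≤ j → j ≤ k → qNum q j ≠ 0) :
    ∀ i : ℕ, 1 ≤ i → i ≤ k - 1 →
      Ssym k R q k * embR k R (i - 1) = q • Ssym k R q k ∧
      embR k R (i - 1) * Ssym k R q k = q • Ssym k R q k ∧
      Ssym k R q k * embR k Rinv (i - 1) = q⁻¹ • Ssym k R q k ∧
      embR k Rinv (i - 1) * Ssym k R q k = q⁻¹ • Ssym k R q k := by
  intro i hi hik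
  obtain ⟨n, rfl⟩ : ∃ n, k = n + 1 := ⟨k - 1, by lia⟩
  have hq : q⁻¹ ≠ q := by simp [inv_eq_self₀, hq0, hq1, hqm1]
  have hqInt (j : ℕ) (hj : 2 ≤ j) (hjn : j ≤ n) : qInt q j ≠ 0 := by
    rw [← qNum_eq_qInt hq]
    exact hqk j hj (by lia)
  have hR : IsHeckeFamily q (embR (n + 1) R) n := isHeckeFamily_embR hbr hH n
  rw [Ssym_succ_eq_heckeSymmetrizer hq]
  have hright := hR.heckeSymmetrizer_mul hqInt (i - 1) (by lia)
  have hleft := hR.mul_heckeSymmetrizer hqInt (i - 1) (by lia)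
  exact ⟨hright, hleft,
    mul_eq_inv_smul_of_mul_eq_smul' hq0 (embR_mul_embR_eq_one hinv (by lia)) hright,
    mul_eq_inv_smul_of_mul_eq_smul hq0 (embR_mul_embR_eq_one hinv' (by lia)) hleft⟩
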